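/- The closed irreducible subsets of ℍ are exactly the down-closures ↓x of single points x ∈ ℍ and the down-closures ↓L_s of levels L_s = {(m,s) : m ∈ ℕ}, s ∈ ℕ*. Moreover, the lattices Γ(ℍ) and Γ(ℍ̂) of Scott-closed subsets are order-isomorphic, while ℍ and its order sobrification ℍ̂ are not order-isomorphic (ℍ̂ has a largest element and ℍ does not); hence the class of all dcpos is not Γ-faithful. -/

import Mathlib

namespace HoZhao

variable {α : Type*}

/-- A set is Scott-closed if it is a lower set and contains the supremum of each of its
nonempty directed subsets. -/
def ScottClosed [Preorder α] (S : Set α) : Prop :=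
  IsLowerSet S ∧ ∀ d : Set α, d ⊆ S → d.Nonempty → DirectedOn (· ≤ ·) d →
    ∀ a : α, IsLUB d a → a ∈ S

/-- A nonempty set is irreducible if whenever it is covered by two Scott-closed sets it is
contained in one of them. -/
def ScottIrred [Preorder α] (A : Set α) : Prop :=
  A.Nonempty ∧ ∀ B C : Set α, ScottClosed B → ScottClosed C → A ⊆ B ∪ C → A ⊆ B ∨ A ⊆ C

/-- A dcpo: every nonempty directed subset has a supremum. -/
def IsDcpo (α : Type*) [Preorder α] : Prop :=
  ∀ d : Set α, d.Nonempty → DirectedOn (· ≤ ·) d → ∃ a : α, IsLUB d a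

/-- The order sobrification: the poset of Scott-closed irreducible subsets, ordered by
inclusion. -/
abbrev OrderSob (α : Type*) [Preorder α] :=
  {A : Set α // ScottClosed A ∧ ScottIrred A}

/-- The underlying set of the dcpo ℍ: pairs (m, s) with m ∈ ℕ and s ∈ ℕ*. -/
abbrev HPt := ℕ × List ℕ

/-- (m, n::s) <₁ (m, n'::s) iff n < n'. -/
def hlt1 (p q : HPt) : Prop :=
  ∃ (m n n' : ℕ) (s : List ℕ), n < n' ∧ p = (m, n :: s) ∧ q = (m, n' :: s)

/-- (m, t++s) <₂ (m, s) iff t ≠ ε. -/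
def hlt2 (p q : HPt) : Prop :=
  ∃ (m : ℕ) (t s : List ℕ), t ≠ [] ∧ p = (m, t ++ s) ∧ q = (m, s)

/-- (m, t++s) <₃ (m', s) iff t ≠ ε and min(t) ≤ m'. -/
def hlt3 (p q : HPt) : Prop :=
  ∃ (m m' : ℕ) (t s : List ℕ), t ≠ [] ∧ t.minimum ≤ (m' : ℕ) ∧
    p = (m, t ++ s) ∧ q = (m', s)

/-- The strict order < on ℍ: <₁ ∪ <₂ ∪ <₃ ∪ (<₂;<₁) ∪ (<₃;<₁). -/
def hlt (p q : HPt) : Prop :=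
  hlt1 p q ∨ hlt2 p q ∨ hlt3 p q ∨ (∃ r, hlt2 p r ∧ hlt1 r q) ∨ (∃ r, hlt3 p r ∧ hlt1 r q)

/-- The order ≤ on ℍ: < together with equality. -/
def hle (p q : HPt) : Prop := hlt p q ∨ p = q

/-- Least upper bound with respect to a relation r. -/
def IsLubRel {γ : Type*} (r : γ → γ → Prop) (s : Set γ) (a : γ) : Prop :=
  (∀ x ∈ s, r x a) ∧ ∀ b, (∀ x ∈ s, r x b) → r a b

/-- Scott-closedness with respect to a relation r: a lower set containing the r-suprema of
its nonempty r-directed subsets. -/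
def ScottClosedRel {γ : Type*} (r : γ → γ → Prop) (S : Set γ) : Prop :=
  (∀ x y, r x y → y ∈ S → x ∈ S) ∧
  ∀ d : Set γ, d ⊆ S → d.Nonempty → DirectedOn r d → ∀ a, IsLubRel r d a → a ∈ S

/-- Irreducibility with respect to a relation r. -/
def ScottIrredRel {γ : Type*} (r : γ → γ → Prop) (A : Set γ) : Prop :=
  A.Nonempty ∧ ∀ B C : Set γ, ScottClosedRel r B → ScottClosedRel r C → A ⊆ B ∪ C →
    A ⊆ B ∨ A ⊆ C

/-- The order sobrification ℍ̂: closed irreducible subsets of ℍ, ordered by inclusion. -/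
abbrev HSob := {A : Set HPt // ScottClosedRel hle A ∧ ScottIrredRel hle A}

/-- A' ◁ A in ℍ̂: A' ⊆ ↓x for some x ∈ A. -/
def TriH (A' A : HSob) : Prop := ∃ x ∈ A.val, A'.val ⊆ {y : HPt | hle y x}

/-- ∇A in ℍ̂. -/
def NablaH (A : HSob) : Set HSob := {A' | TriH A' A}

/-- One step in the head position. -/
def st (v w : List ℕ) : Prop := v = w ∨ ∃ n n' s, n < n' ∧ v = n :: s ∧ w = n' :: s

lemma min_le_iff (t : List ℕ) (m : ℕ) : t.minimum ≤ (m : ℕ) ↔ ∃ x ∈ t, x ≤ m := by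
  induction t with
  | nil => simp
  | cons a t ih => simp [List.minimum_cons, ih]

lemma hle_iff (p q : HPt) : hle p q ↔
    ∃ t v, p.2 = t ++ v ∧ st v q.2 ∧ (p.1 = q.1 ∨ ∃ x ∈ t, x ≤ q.1) := by
  constructor
  · rintro ((⟨m, n, n', s, h, rfl, rfl⟩ | ⟨m, t, s, h, rfl, rfl⟩ | ⟨m, m', t, s, h, h', rfl, rfl⟩ |
      ⟨_, ⟨m, t, s, h, rfl, rfl⟩, ⟨m1, n, n', s', h1, h2, rfl⟩⟩ |
      ⟨_, ⟨m, m', t, s, h, h', rfl, rfl⟩, ⟨m1, n, n', s', h1, h2, rfl⟩⟩) | rfl)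
    · exact ⟨[], n :: s, rfl, Or.inr ⟨n, n', s, h, rfl, rfl⟩, Or.inl rfl⟩
    · exact ⟨t, s, rfl, Or.inl rfl, Or.inl rfl⟩
    · exact ⟨t, s, rfl, Or.inl rfl, Or.inr ((min_le_iff _ _).1 h')⟩
    · simp only [Prod.mk.injEq] at h2
      obtain ⟨rfl, rfl⟩ := h2
      exact ⟨t, _, rfl, Or.inr ⟨n, n', s', h1, rfl, rfl⟩, Or.inl rfl⟩
    · simp only [Prod.mk.injEq] at h2
      obtain ⟨rfl, rfl⟩ := h2
      exact ⟨t, _, rfl, Or.inr ⟨n, n', s', h1, rfl, rfl⟩, Or.inr ((min_le_iff _ _).1 h')⟩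
    · exact ⟨[], _, rfl, Or.inl rfl, Or.inl rfl⟩
  · obtain ⟨m, w⟩ := p
    obtain ⟨m', w'⟩ := q
    rintro ⟨t, v, h1, h2, h3⟩
    simp only at h1 h2 h3
    subst h1
    by_cases ht : t = []
    · subst ht
      have : m = m' := by simpa using h3
      subst this
      rcases h2 with rfl | ⟨n, n', s, h, rfl, rfl⟩
      · exact Or.inr rfl
      · exact Or.inl (Or.inl ⟨m, n, n', s, h, rfl, rfl⟩)
    · left
      rcases h3 with rfl | h3
      · rcases h2 with rfl | ⟨n, n', s, h, rfl, rfl⟩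
        · exact Or.inr (Or.inl ⟨m, t, v, ht, rfl, rfl⟩)
        · exact Or.inr (Or.inr (Or.inr (Or.inl ⟨_, ⟨m, t, _, ht, rfl, rfl⟩,
            ⟨m, n, n', s, h, rfl, rfl⟩⟩)))
      · rw [← min_le_iff] at h3
        rcases h2 with rfl | ⟨n, n', s, h, rfl, rfl⟩
        · exact Or.inr (Or.inr (Or.inl ⟨m, m', t, v, ht, h3, rfl, rfl⟩))
        · exact Or.inr (Or.inr (Or.inr (Or.inr ⟨_, ⟨m, m', t, _, ht, h3, rfl, rfl⟩,
            ⟨m', n, n', s, h, rfl, rfl⟩⟩)))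

lemma st_trans {u v w} (h : st u v) (h' : st v w) : st u w := by
  rcases h with rfl | ⟨n, n', s, h, rfl, rfl⟩
  · exact h'
  · rcases h' with rfl | ⟨k, k', s', h', h2, rfl⟩
    · exact Or.inr ⟨_, _, _, h, rfl, rfl⟩
    · simp only [List.cons.injEq] at h2
      obtain ⟨rfl, rfl⟩ := h2
      exact Or.inr ⟨_, _, _, h.trans h', rfl, rfl⟩

lemma st_length {u v} (h : st u v) : u.length = v.length := by
  rcases h with rfl | ⟨n, n', s, h, rfl, rfl⟩ <;> simp

lemma st_cons_left {n s w} : st (n :: s) w ↔ ∃ n', n ≤ n' ∧ w = n' :: s := by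
  constructor
  · rintro (rfl | ⟨a, b, c, h, h1, rfl⟩)
    · exact ⟨n, le_rfl, rfl⟩
    · simp only [List.cons.injEq] at h1
      obtain ⟨rfl, rfl⟩ := h1
      exact ⟨b, h.le, rfl⟩
  · rintro ⟨n', h, rfl⟩
    rcases h.eq_or_lt with rfl | h
    · exact Or.inl rfl
    · exact Or.inr ⟨_, _, _, h, rfl, rfl⟩

lemma st_cons_right {n s w} : st w (n :: s) ↔ ∃ n', n' ≤ n ∧ w = n' :: s := by
  constructor
  · rintro (rfl | ⟨a, b, c, h, rfl, h1⟩)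
    · exact ⟨n, le_rfl, rfl⟩
    · simp only [List.cons.injEq] at h1
      obtain ⟨rfl, rfl⟩ := h1
      exact ⟨a, h.le, rfl⟩
  · rintro ⟨n', h, rfl⟩
    rcases h.eq_or_lt with rfl | h
    · exact Or.inl rfl
    · exact Or.inr ⟨_, _, _, h, rfl, rfl⟩

lemma hle_refl (p : HPt) : hle p p := Or.inr rfl

lemma hle_trans {p q r : HPt} (h : hle p q) (h' : hle q r) : hle p r := by
  obtain ⟨m, w⟩ := p
  obtain ⟨m', w'⟩ := q
  obtain ⟨m'', w''⟩ := r
  rw [hle_iff] at *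
  obtain ⟨t, v, rfl, h2, h3⟩ := h
  obtain ⟨t', v', rfl, h2', h3'⟩ := h'
  simp only at *
  cases t' with
  | nil =>
    have : m' = m'' := by simpa using h3'
    subst this
    exact ⟨t, v, rfl, st_trans h2 h2', h3⟩
  | cons a t' =>
    obtain ⟨a', ha, rfl⟩ := st_cons_right.1 (show st v (a :: (t' ++ v')) from h2)
    refine ⟨t ++ a' :: t', v', by simp, h2', ?_⟩
    rcases h3' with rfl | ⟨x, hx, hx'⟩
    · rcases h3 with rfl | ⟨x, hx, hx'⟩
      · exact Or.inl rfl
      · exact Or.inr ⟨x, by simp [hx], hx'⟩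
    · right
      rcases List.mem_cons.1 hx with rfl | hx
      · exact ⟨a', by simp, ha.trans hx'⟩
      · exact ⟨x, by simp [hx], hx'⟩

lemma hle_length {p q : HPt} (h : hle p q) : q.2.length ≤ p.2.length := by
  rw [hle_iff] at h
  obtain ⟨t, v, h1, h2, h3⟩ := h
  rw [h1, ← st_length h2]; simp

lemma hle_of_length {p q : HPt} (h : hle p q) (hl : p.2.length ≤ q.2.length) :
    p.1 = q.1 ∧ st p.2 q.2 := by
  rw [hle_iff] at h
  obtain ⟨t, v, h1, h2, h3⟩ := h
  rw [h1, ← st_length h2] at hl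
  have : t = [] := by
    rw [← List.length_eq_zero_iff]; simp at hl; simp [hl]
  subst this
  simp at h1 h3
  rw [h1]; exact ⟨h3, h2⟩

lemma hle_antisymm {p q : HPt} (h : hle p q) (h' : hle q p) : p = q := by
  obtain ⟨m, w⟩ := p
  obtain ⟨m', w'⟩ := q
  obtain ⟨h1, h2⟩ := hle_of_length h (hle_length h')
  obtain ⟨h1', h2'⟩ := hle_of_length h' (hle_length h)
  simp only at *
  subst h1
  rcases h2 with rfl | ⟨n, n', s, h, rfl, rfl⟩
  · rfl
  · obtain ⟨k, hk, hk'⟩ := st_cons_left.1 h2'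
    simp at hk'
    omega

lemma hle_st (m : ℕ) {v w} (h : st v w) : hle (m, v) (m, w) :=
  (hle_iff _ _).2 ⟨[], v, rfl, h, Or.inl rfl⟩

lemma hle_head (m s) {n n' : ℕ} (h : n ≤ n') : hle (m, n :: s) (m, n' :: s) :=
  hle_st m (st_cons_left.2 ⟨n', h, rfl⟩)

lemma hle_tail (m n s) : hle (m, n :: s) (m, s) :=
  (hle_iff _ _).2 ⟨[n], s, rfl, Or.inl rfl, Or.inl rfl⟩

lemma hle_level (m s) {n m' : ℕ} (h : n ≤ m') : hle (m, n :: s) (m', s) :=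
  (hle_iff _ _).2 ⟨[n], s, rfl, Or.inl rfl, Or.inr ⟨n, by simp, h⟩⟩

/-- The partial order on `ℍ`. -/
abbrev instH : PartialOrder HPt where
  le := hle
  lt a b := hle a b ∧ ¬ hle b a
  le_refl := hle_refl
  le_trans _ _ _ := hle_trans
  le_antisymm _ _ := hle_antisymm

/-- Supremum of a column. -/
lemma column_sup {m s} {q : HPt} (h : ∀ n, hle (m, n :: s) q) : hle (m, s) q := by
  obtain ⟨m', w⟩ := q
  obtain ⟨t, v, h1, h2, h3⟩ := (hle_iff _ _).1 (h (m' + w.sum + 1))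
  simp only at *
  cases t with
  | nil =>
    simp only [List.nil_append] at h1
    rw [← h1, st_cons_left] at h2
    obtain ⟨n', h4, rfl⟩ := h2
    simp at h4
    omega
  | cons a t =>
    simp only [List.cons_append, List.cons.injEq] at h1
    obtain ⟨rfl, rfl⟩ := h1
    refine (hle_iff _ _).2 ⟨t, v, rfl, h2, ?_⟩
    rcases h3 with rfl | ⟨x, hx, hx'⟩
    · exact Or.inl rfl
    · right
      rcases List.mem_cons.1 hx with rfl | hx
      · omega
      · exact ⟨x, hx, hx'⟩

lemma same_length (S : Set HPt) (p : HPt) (hp : p ∈ S)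
    (hmin : ∀ q ∈ S, hle p q → p.2.length ≤ q.2.length) :
    (∃ a ∈ S, hle p a ∧ ∀ q ∈ S, hle p q → hle q a) ∨
    ∃ m s, (∀ q ∈ S, hle p q → ∃ n, q = (m, n :: s)) ∧
      ∀ N, ∃ n, N ≤ n ∧ (m, n :: s) ∈ S ∧ hle p (m, n :: s) := by
  obtain ⟨m, w⟩ := p
  cases w with
  | nil =>
    refine Or.inl ⟨_, hp, hle_refl _, ?_⟩
    rintro ⟨m', w'⟩ hq h
    obtain ⟨h1, h2⟩ := hle_of_length h (hmin _ hq h)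
    simp only at h1 h2
    subst h1
    have := st_length h2
    have : w' = [] := by rw [← List.length_eq_zero_iff]; simpa using this.symm
    subst this
    exact hle_refl _
  | cons n0 s =>
    have key : ∀ q ∈ S, hle (m, n0 :: s) q → ∃ n, n0 ≤ n ∧ q = (m, n :: s) := by
      rintro ⟨m', w'⟩ hq h
      obtain ⟨h1, h2⟩ := hle_of_length h (hmin _ hq h)
      simp only at h1 h2
      subst h1
      obtain ⟨n', hn, rfl⟩ := st_cons_left.1 h2
      exact ⟨n', hn, rfl⟩
    by_cases hb : ∃ N, ∀ n, (m, n :: s) ∈ S → n ≤ N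
    · obtain ⟨N, hN⟩ := hb
      left
      have hbd : BddAbove {n | (m, n :: s) ∈ S} := ⟨N, fun n hn => hN n hn⟩
      have hm := Nat.sSup_mem (s := {n | (m, n :: s) ∈ S}) ⟨n0, hp⟩ hbd
      refine ⟨_, hm, hle_head _ _ (le_csSup hbd hp), ?_⟩
      intro q hq h
      obtain ⟨n, hn, rfl⟩ := key q hq h
      exact hle_head _ _ (le_csSup hbd hq)
    · push Not at hb
      right
      refine ⟨m, s, fun q hq h => ?_, fun N => ?_⟩
      · obtain ⟨n, hn, h⟩ := key q hq h
        exact ⟨n, h⟩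
      · obtain ⟨n, hn, hn'⟩ := hb (max N n0)
        exact ⟨n, by omega, hn, hle_head _ _ (by omega)⟩

lemma exists_min_length (S : Set HPt) (h : S.Nonempty) :
    ∃ q ∈ S, ∀ r ∈ S, q.2.length ≤ r.2.length := by
  classical
  have h : ∃ k, ∃ q ∈ S, q.2.length = k := by
    obtain ⟨q, hq⟩ := h
    exact ⟨_, q, hq, rfl⟩
  obtain ⟨q, hq, hq'⟩ := Nat.find_spec h
  exact ⟨q, hq, fun r hr => by rw [hq']; exact Nat.find_min' h ⟨r, hr, rfl⟩⟩

lemma dir_cases (d : Set HPt) (hd : d.Nonempty) (hdir : DirectedOn hle d) :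
    (∃ a ∈ d, ∀ q ∈ d, hle q a) ∨
    ∃ m s, (∀ q ∈ d, ∃ n, hle q (m, n :: s)) ∧ ∀ N, ∃ n, N ≤ n ∧ (m, n :: s) ∈ d := by
  obtain ⟨p, hp, hmin⟩ := exists_min_length d hd
  rcases same_length d p hp (fun q hq _ => hmin q hq) with ⟨a, ha, hpa, h⟩ | ⟨m, s, h1, h2⟩
  · refine Or.inl ⟨a, ha, fun q hq => ?_⟩
    obtain ⟨r, hr, h3, h4⟩ := hdir p hp q hq
    exact hle_trans h4 (h r hr h3)
  · refine Or.inr ⟨m, s, fun q hq => ?_, fun N => ?_⟩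
    · obtain ⟨r, hr, h3, h4⟩ := hdir p hp q hq
      obtain ⟨n, rfl⟩ := h1 r hr h3
      exact ⟨n, h4⟩
    · obtain ⟨n, h3, h4, _⟩ := h2 N
      exact ⟨n, h3, h4⟩

lemma dir_lub (d : Set HPt) (hd : d.Nonempty) (hdir : DirectedOn hle d) :
    ∃ a, IsLubRel hle d a := by
  rcases dir_cases d hd hdir with ⟨a, ha, h⟩ | ⟨m, s, h1, h2⟩
  · exact ⟨a, h, fun b hb => hb a ha⟩
  · refine ⟨(m, s), fun q hq => ?_, fun b hb => column_sup fun n => ?_⟩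
    · obtain ⟨n, hn⟩ := h1 q hq
      exact hle_trans hn (hle_tail _ _ _)
    · obtain ⟨n', h3, h4⟩ := h2 n
      exact hle_trans (hle_head _ _ h3) (hb _ h4)

lemma closed_iff (S : Set HPt) : ScottClosedRel hle S ↔
    (∀ x y, hle x y → y ∈ S → x ∈ S) ∧ ∀ m s, (∀ n, (m, n :: s) ∈ S) → (m, s) ∈ S := by
  constructor
  · rintro ⟨h1, h2⟩
    refine ⟨h1, fun m s h => ?_⟩
    refine h2 (Set.range fun n : ℕ => ((m, n :: s) : HPt)) ?_ ⟨_, 0, rfl⟩ ?_ _ ⟨?_, ?_⟩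
    · rintro _ ⟨n, rfl⟩
      exact h n
    · rintro _ ⟨n, rfl⟩ _ ⟨n', rfl⟩
      exact ⟨_, ⟨max n n', rfl⟩, hle_head _ _ (le_max_left _ _), hle_head _ _ (le_max_right _ _)⟩
    · rintro _ ⟨n, rfl⟩
      exact hle_tail _ _ _
    · intro b hb
      exact column_sup fun n => hb _ ⟨n, rfl⟩
  · rintro ⟨h1, h2⟩
    refine ⟨h1, fun d hdS hd hdir a ha => ?_⟩
    rcases dir_cases d hd hdir with ⟨x, hx, h⟩ | ⟨m, s, h3, h4⟩
    · exact h1 _ _ (ha.2 x h) (hdS hx)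
    · refine h1 _ (m, s) (ha.2 _ fun q hq => ?_) (h2 m s fun n => ?_)
      · obtain ⟨n, hn⟩ := h3 q hq
        exact hle_trans hn (hle_tail _ _ _)
      · obtain ⟨n', h5, h6⟩ := h4 n
        exact h1 _ _ (hle_head _ _ h5) (hdS h6)

/-- Maximal elements of `A`. -/
def Mx (A : Set HPt) : Set HPt := {a | a ∈ A ∧ ∀ b ∈ A, hle a b → b = a}

lemma exists_mx {A : Set HPt} (hA : ScottClosedRel hle A) {p} (hp : p ∈ A) :
    ∃ a ∈ Mx A, hle p a := by
  rw [closed_iff] at hA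
  obtain ⟨q, ⟨hq, hpq⟩, hmin⟩ := exists_min_length {q | q ∈ A ∧ hle p q} ⟨p, hp, hle_refl p⟩
  rcases same_length A q hq (fun r hr hqr => hmin r ⟨hr, hle_trans hpq hqr⟩) with
    ⟨a, ha, hqa, h⟩ | ⟨m, s, h1, h2⟩
  · exact ⟨a, ⟨ha, fun b hb hab => hle_antisymm (h b hb (hle_trans hqa hab)) hab⟩,
      hle_trans hpq hqa⟩
  · exfalso
    obtain ⟨n, rfl⟩ := h1 q hq (hle_refl q)
    have h3 : (m, s) ∈ A := hA.2 m s fun n => by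
      obtain ⟨n', h3, h4, _⟩ := h2 n
      exact hA.1 _ _ (hle_head _ _ h3) h4
    have := hmin (m, s) ⟨h3, hle_trans hpq (hle_tail _ _ _)⟩
    simp at this

/-- Unboundedly many elements of a level give the whole level. -/
lemma level_sub {A : Set HPt} (hA : ScottClosedRel hle A) {s}
    (h : ∀ K : ℕ, ∃ m, K ≤ m ∧ (m, s) ∈ A) (m : ℕ) : (m, s) ∈ A := by
  rw [closed_iff] at hA
  refine hA.2 m s fun n => ?_
  obtain ⟨m', h1, h2⟩ := h n
  exact hA.1 _ _ (hle_level _ _ h1) h2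

/-- Down-closure. -/
def dn (N : Set HPt) : Set HPt := {y | ∃ x ∈ N, hle y x}

lemma dn_closed {A : Set HPt} (hA : ScottClosedRel hle A) {N : Set HPt} (hN : N ⊆ Mx A)
    (hl : ∀ w, (∀ K : ℕ, ∃ m, K ≤ m ∧ (m, w) ∈ N) → ∀ m, (m, w) ∈ dn N) :
    ScottClosedRel hle (dn N) := by
  have hA' := (closed_iff A).1 hA
  have hNA : dn N ⊆ A := by
    rintro y ⟨x, hx, hyx⟩
    exact hA.1 _ _ hyx (hN hx).1
  refine (closed_iff _).2 ⟨?_, ?_⟩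
  · rintro x y hxy ⟨z, hz, hyz⟩
    exact ⟨z, hz, hle_trans hxy hyz⟩
  intro m r h
  by_contra hcon
  have hmr : (m, r) ∈ A := hA'.2 m r fun n => hNA (h n)
  have key : ∀ n : ℕ, ∃ k w, n ≤ k ∧ st r w ∧ (k, w) ∈ N := by
    intro n
    obtain ⟨⟨k, w⟩, hkw, hle'⟩ := h (n + r.sum)
    obtain ⟨t, v, h1, h2, h3⟩ := (hle_iff _ _).1 hle'
    simp only at h1 h2 h3
    cases t with
    | nil =>
      exfalso
      simp only [List.nil_append] at h1
      have h3 : m = k := by simpa using h3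
      subst h3
      rw [← h1, st_cons_left] at h2
      obtain ⟨n', h4, rfl⟩ := h2
      have := (hN hkw).2 _ hmr (hle_tail _ _ _)
      simp at this
    | cons a t =>
      simp only [List.cons_append, List.cons.injEq] at h1
      obtain ⟨rfl, rfl⟩ := h1
      have h4 : ¬ (m = k ∨ ∃ x ∈ t, x ≤ k) := fun h4 =>
        hcon ⟨_, hkw, (hle_iff _ _).2 ⟨t, v, rfl, h2, h4⟩⟩
      push Not at h4
      rcases h3 with h3 | ⟨x, hx, hx'⟩
      · exact absurd h3 h4.1
      · rcases List.mem_cons.1 hx with rfl | hx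
        · cases t with
          | nil => exact ⟨k, w, by omega, h2, hkw⟩
          | cons b t =>
            have := h4.2 b (by simp)
            simp at hx'
            omega
        · exact absurd hx' (not_le.2 (h4.2 x hx))
  have hfin : ∀ w, st r w → ∃ K, ∀ k, K ≤ k → (k, w) ∉ N := by
    intro w hw
    by_contra! hc
    obtain ⟨x, hx, hx'⟩ := hl w hc m
    exact hcon ⟨x, hx, hle_trans (hle_st m hw) hx'⟩
  cases r with
  | nil =>
    obtain ⟨K, hK⟩ := hfin [] (Or.inl rfl)
    obtain ⟨k, w, h1, h2, h3⟩ := key K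
    have : w = [] := by rw [← List.length_eq_zero_iff, ← st_length h2]; rfl
    subst this
    exact hK k h1 h3
  | cons a r =>
    have hfin' : ∀ c, ∃ K, ∀ c' ≤ c, a ≤ c' → ∀ k, K ≤ k → (k, c' :: r) ∉ N := by
      intro c
      induction c with
      | zero =>
        by_cases ha : a ≤ 0
        · obtain ⟨K, hK⟩ := hfin (0 :: r) (st_cons_left.2 ⟨0, ha, rfl⟩)
          refine ⟨K, fun c' hc' _ k hk => ?_⟩
          obtain rfl : c' = 0 := by omega
          exact hK k hk
        · exact ⟨0, fun c' hc' h => by omega⟩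
      | succ c ih =>
        obtain ⟨K0, hK0⟩ := ih
        by_cases ha : a ≤ c + 1
        · obtain ⟨K, hK⟩ := hfin ((c + 1) :: r) (st_cons_left.2 ⟨c + 1, ha, rfl⟩)
          refine ⟨max K0 K, fun c' hc' h k hk => ?_⟩
          rcases hc'.eq_or_lt with rfl | hc'
          · exact hK k (by omega)
          · exact hK0 c' (by omega) h k (by omega)
        · exact ⟨0, fun c' hc' h => by omega⟩
    have hlev : ∀ k, (k, r) ∈ A := by
      intro k
      refine hA'.2 k r fun c => level_sub hA (fun K => ?_) k
      obtain ⟨K0, hK0⟩ := hfin' c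
      obtain ⟨j, w, h1, h2, h3⟩ := key (max K K0)
      obtain ⟨n', hn', rfl⟩ := st_cons_left.1 h2
      refine ⟨j, by omega, hA'.1 _ _ (hle_head _ _ ?_) (hN h3).1⟩
      by_contra hlt
      exact hK0 n' (by omega) hn' j (by omega) h3
    obtain ⟨j, w, h1, h2, h3⟩ := key 0
    obtain ⟨n', hn', rfl⟩ := st_cons_left.1 h2
    have := (hN h3).2 _ (hlev j) (hle_tail _ _ _)
    simp at this

lemma pt_closed (x : HPt) : ScottClosedRel hle {y | hle y x} :=
  ⟨fun _ _ h h' => hle_trans h h', fun _ hd _ _ _ ha => ha.2 x hd⟩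

lemma pt_irred (x : HPt) : ScottIrredRel hle {y | hle y x} := by
  refine ⟨⟨x, hle_refl x⟩, fun B C hB hC h => ?_⟩
  rcases h (hle_refl x) with h | h
  · exact Or.inl fun y hy => hB.1 _ _ hy h
  · exact Or.inr fun y hy => hC.1 _ _ hy h

lemma level_iff (p : HPt) (s) : (∃ m : ℕ, hle p (m, s)) ↔ ∃ t v, p.2 = t ++ v ∧ st v s := by
  constructor
  · rintro ⟨m, h⟩
    obtain ⟨t, v, h1, h2, h3⟩ := (hle_iff _ _).1 h
    exact ⟨t, v, h1, h2⟩
  · rintro ⟨t, v, h1, h2⟩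
    exact ⟨p.1, (hle_iff _ _).2 ⟨t, v, h1, h2, Or.inl rfl⟩⟩

lemma level_self {m m' s r} (h : hle (m, r) (m', s)) (k : ℕ) : hle (k, r) (k, s) := by
  obtain ⟨t, v, h1, h2, h3⟩ := (hle_iff _ _).1 h
  exact (hle_iff _ _).2 ⟨t, v, h1, h2, Or.inl rfl⟩

lemma level_closed (s : List ℕ) : ScottClosedRel hle {y : HPt | ∃ m : ℕ, hle y (m, s)} := by
  refine (closed_iff _).2 ⟨?_, ?_⟩
  · rintro x y hxy ⟨m, h⟩
    exact ⟨m, hle_trans hxy h⟩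
  · intro m r h
    have h' := h (s.sum + 1)
    simp only [Set.mem_ofPred_eq, level_iff] at h' ⊢
    obtain ⟨t, v, h1, h2⟩ := h'
    cases t with
    | nil =>
      simp only [List.nil_append] at h1
      rw [← h1, st_cons_left] at h2
      obtain ⟨n', h4, rfl⟩ := h2
      simp at h4
    | cons a t =>
      simp only [List.cons_append, List.cons.injEq] at h1
      exact ⟨t, v, h1.2, h2⟩

lemma level_irred (s : List ℕ) : ScottIrredRel hle {y : HPt | ∃ m : ℕ, hle y (m, s)} := by
  refine ⟨⟨(0, s), 0, hle_refl _⟩, fun B C hB hC h => ?_⟩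
  by_cases hb : ∀ K : ℕ, ∃ m, K ≤ m ∧ (m, s) ∈ B
  · left
    rintro y ⟨m, hm⟩
    exact hB.1 _ _ hm (level_sub hB hb m)
  · push Not at hb
    obtain ⟨K, hK⟩ := hb
    right
    rintro y ⟨m, hm⟩
    refine hC.1 _ _ hm (level_sub hC (fun K' => ⟨max K K', le_max_right _ _, ?_⟩) m)
    rcases h ⟨max K K', hle_refl _⟩ with h | h
    · exact absurd h (hK _ (le_max_left _ _))
    · exact h

lemma irred_char {A : Set HPt} (hA : ScottClosedRel hle A) (hI : ScottIrredRel hle A) :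
    (∃ x : HPt, A = {y : HPt | hle y x}) ∨
        (∃ s : List ℕ, A = {y : HPt | ∃ m : ℕ, hle y (m, s)}) := by
  by_cases hc : ∃ s, (∀ m : ℕ, (m, s) ∈ A) ∧ ∃ m : ℕ, (m, s) ∈ Mx A
  · obtain ⟨s, hs, m, hm⟩ := hc
    right
    refine ⟨s, Set.Subset.antisymm ?_ ?_⟩
    · have hcl : ScottClosedRel hle (dn {a | a ∈ Mx A ∧ a.2 ≠ s}) := by
        refine dn_closed hA (fun a ha => ha.1) fun w hw m' => ?_
        have hwA := level_sub hA (fun K => by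
          obtain ⟨k, h1, h2⟩ := hw K
          exact ⟨k, h1, h2.1.1⟩) m'
        obtain ⟨⟨k, w'⟩, h1, h2⟩ := exists_mx hA hwA
        by_cases hws : w' = s
        · exfalso
          subst hws
          obtain ⟨j, _, h3, h4⟩ := hw 0
          have := h3.2 _ (hs j) (level_self h2 j)
          simp only [Prod.mk.injEq] at this
          exact h4 this.2.symm
        · exact ⟨_, ⟨h1, hws⟩, h2⟩
      rcases hI.2 _ _ (level_closed s) hcl (fun p hp => by
        obtain ⟨⟨k, w'⟩, h1, h2⟩ := exists_mx hA hp
        by_cases hws : w' = s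
        · subst hws
          exact Or.inl ⟨k, h2⟩
        · exact Or.inr ⟨_, ⟨h1, hws⟩, h2⟩) with h | h
      · exact h
      · exfalso
        obtain ⟨x, ⟨h1, h2⟩, h3⟩ := h hm.1
        exact h2 (congrArg Prod.snd (hm.2 x h1.1 h3))
    · rintro y ⟨k, hk⟩
      exact hA.1 _ _ hk (hs k)
  · left
    push Not at hc
    obtain ⟨p, hp⟩ := hI.1
    obtain ⟨x, hx, _⟩ := exists_mx hA hp
    refine ⟨x, Set.Subset.antisymm ?_ ?_⟩
    · have hcl : ScottClosedRel hle (dn {a | a ∈ Mx A ∧ a ≠ x}) := by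
        refine dn_closed hA (fun a ha => ha.1) fun w hw m' => ?_
        exfalso
        obtain ⟨k, h1, h2⟩ := hw 0
        exact hc w (level_sub hA (fun K => by
          obtain ⟨k, h1, h2⟩ := hw K
          exact ⟨k, h1, h2.1.1⟩)) k h2.1
      rcases hI.2 _ _ (pt_closed x) hcl (fun p hp => by
        obtain ⟨a, h1, h2⟩ := exists_mx hA hp
        by_cases hax : a = x
        · subst hax
          exact Or.inl h2
        · exact Or.inr ⟨_, ⟨h1, hax⟩, h2⟩) with h | h
      · exact h
      · exfalso
        obtain ⟨a, ⟨h1, h2⟩, h3⟩ := h hx.1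
        exact h2 (hx.2 a h1.1 h3)
    · intro y hy
      exact hA.1 _ _ hy hx.1

/-- The element `↓x` of the sobrification. -/
def ptS (x : HPt) : HSob := ⟨{y | hle y x}, pt_closed x, pt_irred x⟩

/-- The element `↓L_s` of the sobrification. -/
def levS (s : List ℕ) : HSob := ⟨{y | ∃ m : ℕ, hle y (m, s)}, level_closed s, level_irred s⟩

lemma ptS_le (x : HPt) (B : HSob) : ptS x ≤ B ↔ x ∈ B.1 :=
  ⟨fun h => h (hle_refl x), fun h _ hy => B.2.1.1 _ _ hy h⟩

lemma levS_le (s) (B : HSob) : levS s ≤ B ↔ ∀ m : ℕ, (m, s) ∈ B.1 :=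
  ⟨fun h m => h ⟨m, hle_refl _⟩, fun h _ ⟨m, hy⟩ => B.2.1.1 _ _ hy (h m)⟩

lemma sob_cases (B : HSob) : (∃ x, B = ptS x) ∨ ∃ s, B = levS s := by
  rcases irred_char B.2.1 B.2.2 with ⟨x, hx⟩ | ⟨s, hs⟩
  · exact Or.inl ⟨x, Subtype.ext hx⟩
  · exact Or.inr ⟨s, Subtype.ext hs⟩

/-- Directed suprema in the sobrification. -/
lemma sob_sup (d : Set HSob) (hd : d.Nonempty) (hdir : DirectedOn (· ≤ ·) d) :
    ∃ a : HSob, IsLUB d a ∧ ∀ S, ScottClosedRel hle S → (∀ B ∈ d, B.1 ⊆ S) → a.1 ⊆ S := by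
  let U : Set HPt := {x | ∀ S, ScottClosedRel hle S → (∀ B ∈ d, B.1 ⊆ S) → x ∈ S}
  have hU : ScottClosedRel hle U := by
    refine ⟨fun x y hxy hy S hS h => hS.1 _ _ hxy (hy S hS h), ?_⟩
    intro e heU he hedir a ha S hS h
    exact hS.2 e (fun x hx => heU hx S hS h) he hedir a ha
  have hdU : ∀ B ∈ d, B.1 ⊆ U := fun B hB x hx S hS h => h B hB hx
  have hI : ScottIrredRel hle U := by
    constructor
    · obtain ⟨B, hB⟩ := hd
      obtain ⟨x, hx⟩ := B.2.2.1
      exact ⟨x, hdU B hB hx⟩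
    · intro C D hC hD h
      by_cases h1 : ∀ B ∈ d, B.1 ⊆ C
      · exact Or.inl fun x hx => hx C hC h1
      · push Not at h1
        obtain ⟨B, hB, hBC⟩ := h1
        refine Or.inr fun x hx => hx D hD fun B' hB' => ?_
        obtain ⟨E, hE, h2, h3⟩ := hdir B hB B' hB'
        rcases E.2.2.2 C D hC hD ((hdU E hE).trans h) with h4 | h4
        · exact absurd (Set.Subset.trans h2 h4) hBC
        · exact Set.Subset.trans h3 h4
  refine ⟨⟨U, hU, hI⟩, ⟨fun B hB => hdU B hB, fun B hB x hx => ?_⟩, fun S hS h x hx => hx S hS h⟩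
  exact hx B.1 B.2.1 fun B' hB' => hB hB'

lemma sob_closed {A : Set HPt} (hA : ScottClosedRel hle A) :
    ScottClosed {B : HSob | B.1 ⊆ A} := by
  refine ⟨fun B B' h hB => Set.Subset.trans h hB, fun d hdA hd hdir a ha => ?_⟩
  obtain ⟨b, hb, hb'⟩ := sob_sup d hd hdir
  obtain rfl := ha.unique hb
  exact hb' A hA fun B hB => hdA hB

lemma mem_of_pts {𝒜 : Set HSob} (h𝒜 : ScottClosed 𝒜) (B : HSob)
    (h : ∀ x ∈ B.1, ptS x ∈ 𝒜) : B ∈ 𝒜 := by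
  rcases sob_cases B with ⟨x, rfl⟩ | ⟨s, rfl⟩
  · exact h x (hle_refl x)
  · refine h𝒜.2 (Set.range fun n : ℕ => levS (n :: s)) ?_ ⟨_, 0, rfl⟩ ?_ _ ⟨?_, ?_⟩
    · rintro _ ⟨n, rfl⟩
      refine h𝒜.1 ?_ (h (n, s) ⟨n, hle_refl _⟩)
      exact (levS_le _ _).2 fun m => hle_level _ _ le_rfl
    · rintro _ ⟨n, rfl⟩ _ ⟨n', rfl⟩
      refine ⟨_, ⟨max n n', rfl⟩, (levS_le _ _).2 fun m => ⟨m, ?_⟩,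
        (levS_le _ _).2 fun m => ⟨m, ?_⟩⟩
      · exact hle_head _ _ (le_max_left _ _)
      · exact hle_head _ _ (le_max_right _ _)
    · rintro _ ⟨n, rfl⟩
      exact (levS_le _ _).2 fun m => ⟨m, hle_tail _ _ _⟩
    · intro B hB
      refine (levS_le _ _).2 fun m => ((closed_iff _).1 B.2.1).2 m s fun n => ?_
      exact (levS_le _ _).1 (hB ⟨n, rfl⟩) m

lemma pts_closed {𝒜 : Set HSob} (h𝒜 : ScottClosed 𝒜) :
    ScottClosedRel hle {x | ptS x ∈ 𝒜} := by
  refine ⟨fun x y h hy => h𝒜.1 ((ptS_le x (ptS y)).2 h) hy, fun d hd hne hdir a ha => ?_⟩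
  refine h𝒜.2 (ptS '' d) ?_ (hne.image _) ?_ _ ⟨?_, ?_⟩
  · rintro _ ⟨x, hx, rfl⟩
    exact hd hx
  · rintro _ ⟨x, hx, rfl⟩ _ ⟨y, hy, rfl⟩
    obtain ⟨z, hz, h1, h2⟩ := hdir x hx y hy
    exact ⟨_, ⟨z, hz, rfl⟩, (ptS_le _ _).2 h1, (ptS_le _ _).2 h2⟩
  · rintro _ ⟨x, hx, rfl⟩
    exact (ptS_le _ _).2 (ha.1 x hx)
  · intro B hB
    refine (ptS_le _ _).2 (B.2.1.2 d (fun x hx => ?_) hne hdir a ha)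
    exact (ptS_le _ _).1 (hB ⟨x, hx, rfl⟩)

/-- `Γ(ℍ) ≅ Γ(ℍ̂)`. -/
def gammaIso : {A : Set HPt // ScottClosedRel hle A} ≃o {𝒜 : Set HSob // ScottClosed 𝒜} where
  toFun A := ⟨{B | B.1 ⊆ A.1}, sob_closed A.2⟩
  invFun 𝒜 := ⟨{x | ptS x ∈ 𝒜.1}, pts_closed 𝒜.2⟩
  left_inv A := by
    apply Subtype.ext
    ext x
    exact ⟨fun h => h (hle_refl x), fun h _ hy => A.2.1 _ _ hy h⟩
  right_inv 𝒜 := by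
    apply Subtype.ext
    ext B
    exact ⟨fun h => mem_of_pts 𝒜.2 B h, fun h x hx => 𝒜.2.1 ((ptS_le _ _).2 hx) h⟩
  map_rel_iff' := by
    intro A A'
    constructor
    · intro h x hx
      exact h (show (ptS x).1 ⊆ A.1 from fun y hy => A.2.1 _ _ hy hx) (hle_refl x)
    · intro h B hB
      exact Set.Subset.trans hB h

lemma closed_inst (S : Set HPt) :
    @ScottClosed HPt instH.toPreorder S ↔ ScottClosedRel hle S := by
  constructor
  · rintro ⟨h1, h2⟩
    exact ⟨fun x y h hy => h1 h hy, fun d hd hne hdir a ha =>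
      h2 d hd hne hdir a ⟨fun x hx => ha.1 x hx, fun b hb => ha.2 b fun x hx => hb hx⟩⟩
  · rintro ⟨h1, h2⟩
    exact ⟨fun x y h hy => h1 _ _ h hy, fun d hd hne hdir a ha =>
      h2 d hd hne hdir a ⟨fun x hx => ha.1 hx, fun b hb => ha.2 fun x hx => hb x hx⟩⟩

lemma instH_dcpo : @IsDcpo HPt instH.toPreorder := by
  intro d hne hdir
  obtain ⟨a, ha⟩ := dir_lub d hne hdir
  exact ⟨a, fun x hx => ha.1 x hx, fun b hb => ha.2 b fun x hx => hb hx⟩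

/-- `Γ(ℍ)` in the two presentations. -/
def instIso : {S : Set HPt // @ScottClosed HPt instH.toPreorder S} ≃o
    {A : Set HPt // ScottClosedRel hle A} where
  toFun S := ⟨S.1, (closed_inst _).1 S.2⟩
  invFun S := ⟨S.1, (closed_inst _).2 S.2⟩
  left_inv _ := rfl
  right_inv _ := rfl
  map_rel_iff' := Iff.rfl

lemma sob_top (A : HSob) : A ≤ levS [] := by
  rintro ⟨m, s⟩ _
  exact ⟨m, (hle_iff _ _).2 ⟨s, [], by simp, Or.inl rfl, Or.inl rfl⟩⟩

lemma no_top : ¬ ∃ t : HPt, ∀ p : HPt, hle p t := by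
  rintro ⟨t, ht⟩
  have := (hle_of_length (ht (t.1 + 1, [])) (by simp)).1
  simp at this

lemma no_iso : ¬ ∃ f : HPt → HSob, Function.Bijective f ∧ ∀ p q : HPt, hle p q ↔ f p ≤ f q := by
  rintro ⟨f, hf, h⟩
  obtain ⟨t, ht⟩ := hf.2 (levS [])
  exact no_top ⟨t, fun p => (h p t).2 (ht ▸ sob_top _)⟩

/-- the closed irreducible subsets of ℍ are exactly the principal downsets
↓x and the downsets ↓L_s of levels; Γ(ℍ) ≅ Γ(ℍ̂); ℍ̂ has a largest element while ℍ does
not, so ℍ and ℍ̂ are not order isomorphic; hence the class of all dcpos is not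
Γ-faithful. -/
theorem H_answers_HoZhao_problem :
    (∀ A : Set HPt, (ScottClosedRel hle A ∧ ScottIrredRel hle A) ↔
      ((∃ x : HPt, A = {y : HPt | hle y x}) ∨
        (∃ s : List ℕ, A = {y : HPt | ∃ m : ℕ, hle y (m, s)}))) ∧
    Nonempty ({A : Set HPt // ScottClosedRel hle A} ≃o {𝒜 : Set HSob // ScottClosed 𝒜}) ∧
    (∃ T : HSob, ∀ A : HSob, A ≤ T) ∧
    (¬ ∃ t : HPt, ∀ p : HPt, hle p t) ∧
    (¬ ∃ f : HPt → HSob, Function.Bijective f ∧ ∀ p q : HPt, hle p q ↔ f p ≤ f q) ∧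
    ¬ (∀ (D E : Type) [PartialOrder D] [PartialOrder E], IsDcpo D → IsDcpo E →
        Nonempty ({S : Set D // ScottClosed S} ≃o {S : Set E // ScottClosed S}) →
        Nonempty (D ≃o E)) := by
  refine ⟨fun A => ⟨fun h => irred_char h.1 h.2, ?_⟩, ⟨gammaIso⟩, ⟨levS [], sob_top⟩,
    no_top, no_iso, fun H => ?_⟩
  · rintro (⟨x, rfl⟩ | ⟨s, rfl⟩)
    · exact ⟨pt_closed x, pt_irred x⟩
    · exact ⟨level_closed s, level_irred s⟩
  · obtain ⟨f⟩ := @H HPt HSob instH _ instH_dcpo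
      (fun d hne hdir => by
        obtain ⟨a, ha, _⟩ := sob_sup d hne hdir
        exact ⟨a, ha⟩) ⟨instIso.trans gammaIso⟩
    exact no_iso ⟨f, f.toEquiv.bijective, fun p q => f.map_rel_iff.symm⟩

end HoZhao
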